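/- arXiv:1607.04166 — 4 statements merged into one kernel-verified Lean document; each statement's English description precedes it below -/
import Mathlib

section
/- For every real λ > 0 and every β with 0 < β < 1, the improper integral ∫₀^∞ (ρ^{1/β} + λ)^{-1} dρ converges and λ^β = (λ sin(βπ)/(βπ)) · ∫₀^∞ (ρ^{1/β} + λ)^{-1} dρ. -/
open MeasureTheory Real

theorem aux_beta (β : ℝ) (hβ0 : 0 < β) (hβ1 : β < 1) :
    ∫ x in Set.Ioo (0 : ℝ) 1, x ^ (β - 1) * (1 - x) ^ (-β) = π / sin (π * β) := by
  have h := Complex.Gamma_mul_Gamma_eq_betaIntegral (s := (β : ℂ)) (t := ((1 - β : ℝ) : ℂ))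
    (by simpa using hβ0) (by simpa using hβ1)
  have h1 : (β : ℂ) + ((1 - β : ℝ) : ℂ) = 1 := by push_cast; ring
  rw [h1, Complex.Gamma_one, one_mul, Complex.Gamma_ofReal, Complex.Gamma_ofReal,
    ← Complex.ofReal_mul, Real.Gamma_mul_Gamma_one_sub] at h
  have h2 : Complex.betaIntegral (β : ℂ) ((1 - β : ℝ) : ℂ)
      = ((∫ x in Set.Ioo (0 : ℝ) 1, x ^ (β - 1) * (1 - x) ^ (-β) : ℝ) : ℂ) := by
    rw [Complex.betaIntegral, intervalIntegral.integral_of_le zero_le_one,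
      integral_Ioc_eq_integral_Ioo, ← integral_complex_ofReal]
    apply setIntegral_congr_fun measurableSet_Ioo
    intro x hx
    have h3 : 0 ≤ 1 - x := by linarith [hx.2]
    simp only
    rw [Complex.ofReal_mul, Complex.ofReal_cpow hx.1.le, Complex.ofReal_cpow h3]
    push_cast
    ring_nf
  rw [h2] at h
  exact_mod_cast h.symm

theorem stmt1 (lam β : ℝ) (hlam : 0 < lam) (hβ0 : 0 < β) (hβ1 : β < 1) :
    IntegrableOn (fun ρ : ℝ => (ρ ^ (1 / β) + lam)⁻¹) (Set.Ioi 0) ∧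
    lam ^ β = (lam * Real.sin (β * Real.pi) / (β * Real.pi)) *
      ∫ ρ in Set.Ioi (0 : ℝ), (ρ ^ (1 / β) + lam)⁻¹ := by
  have hs : 0 < sin (π * β) :=
    sin_pos_of_pos_of_lt_pi (by positivity) (by nlinarith [pi_pos])
  set φ : ℝ → ℝ := fun x => (lam * (x / (1 - x))) ^ β with hφ
  set φ' : ℝ → ℝ := fun x => lam * (1 / (1 - x) ^ 2) * β * (lam * (x / (1 - x))) ^ (β - 1)
    with hφ'
  have hpos : ∀ x ∈ Set.Ioo (0 : ℝ) 1, 0 < lam * (x / (1 - x)) := fun x hx =>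
    mul_pos hlam (div_pos hx.1 (by linarith [hx.2]))
  have hder : ∀ x ∈ Set.Ioo (0 : ℝ) 1, HasDerivWithinAt φ (φ' x) (Set.Ioo 0 1) x := by
    intro x hx
    have h1 : (1 - x) ≠ 0 := by linarith [hx.2]
    have := ((((hasDerivAt_id x).div ((hasDerivAt_id x).const_sub 1) h1).const_mul lam).rpow_const
      (p := β) (Or.inl (hpos x hx).ne'))
    refine (this.congr_deriv ?_).hasDerivWithinAt
    simp only [hφ', id, Pi.div_apply]
    congr 3
    ring
  have hinj : Set.InjOn φ (Set.Ioo 0 1) := by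
    intro x hx y hy h
    have h1 : (1 - x) ≠ 0 := by linarith [hx.2]
    have h2 : (1 - y) ≠ 0 := by linarith [hy.2]
    have := (Real.rpow_left_inj (hpos x hx).le (hpos y hy).le hβ0.ne').1 h
    have := mul_left_cancel₀ hlam.ne' this
    rw [div_eq_div_iff h1 h2] at this
    linarith
  have himg : φ '' Set.Ioo 0 1 = Set.Ioi 0 := by
    ext y
    constructor
    · rintro ⟨x, hx, rfl⟩
      exact Real.rpow_pos_of_pos (hpos x hx) _
    · intro hy
      have hy : 0 < y := hy
      have hz : 0 < y ^ (1 / β) := Real.rpow_pos_of_pos hy _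
      set z := y ^ (1 / β) with hzd
      refine ⟨z / (z + lam), ⟨by positivity, by rw [div_lt_one (by positivity)]; linarith⟩, ?_⟩
      have : lam * (z / (z + lam) / (1 - z / (z + lam))) = z := by
        have : 1 - z / (z + lam) = lam / (z + lam) := by field_simp; ring
        rw [this]; field_simp
      simp only [hφ]
      rw [this, hzd, ← Real.rpow_mul hy.le, one_div_mul_cancel hβ0.ne', Real.rpow_one]
  have hcv := integral_image_eq_integral_abs_deriv_smul measurableSet_Ioo hder hinj
    (fun ρ : ℝ => (ρ ^ (1 / β) + lam)⁻¹)
  have hcongr : ∫ x in Set.Ioo (0 : ℝ) 1, |φ' x| • ((φ x) ^ (1 / β) + lam)⁻¹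
      = ∫ x in Set.Ioo (0 : ℝ) 1, (lam ^ (β - 1) * β) * (x ^ (β - 1) * (1 - x) ^ (-β)) := by
    apply setIntegral_congr_fun measurableSet_Ioo
    intro x hx
    have hp := hpos x hx
    have h1 : 0 < 1 - x := by linarith [hx.2]
    have h0 := hx.1
    have hφx : (φ x) ^ (1 / β) = lam * (x / (1 - x)) := by
      simp only [hφ]
      rw [← Real.rpow_mul hp.le, mul_one_div_cancel hβ0.ne', Real.rpow_one]
    have hφ'x : 0 < φ' x := by simp only [hφ']; positivity
    simp only [smul_eq_mul]
    rw [hφx, abs_of_pos hφ'x]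
    simp only [hφ']
    rw [Real.mul_rpow hlam.le (by positivity), Real.div_rpow h0.le h1.le,
      show (1 - x) ^ (-β) = ((1 - x) ^ (β - 1) * (1 - x))⁻¹ by
        rw [Real.rpow_neg h1.le, Real.rpow_sub_one h1.ne']; field_simp]
    have h4 : lam * (x / (1 - x)) + lam = lam / (1 - x) := by field_simp; ring
    rw [h4]
    have := Real.rpow_pos_of_pos h1 (β - 1)
    field_simp
  rw [himg, hcongr, integral_const_mul, aux_beta β hβ0 hβ1] at hcv
  have hl := Real.rpow_pos_of_pos hlam (β - 1)
  constructor
  · by_contra hn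
    have h0 := integral_undef hn
    rw [hcv] at h0
    have : 0 < lam ^ (β - 1) * β * (π / sin (π * β)) := by positivity
    linarith
  · rw [hcv, Real.rpow_sub_one hlam.ne', mul_comm β π]
    field_simp
end

section
/- Let 0 < β < 1 and let λ > 0 and τ > 0 be real numbers. Then the integral ∫_{-1}^{1} (1-t)^{β-1}(1+t)^{-β} (τ(1-t) + (1+t)λ)^{-1} dt converges and λ^β = (2 sin(βπ)/π) · τ^β · λ · ∫_{-1}^{1} (1-t)^{β-1}(1+t)^{-β} (τ(1-t) + (1+t)λ)^{-1} dt. -/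
open MeasureTheory Real

lemma beta_aux (β : ℝ) (hβ0 : 0 < β) (hβ1 : β < 1) :
    IntegrableOn (fun x : ℝ => x ^ (β - 1) * (1 - x) ^ (-β)) (Set.Ioo 0 1) ∧
    ∫ x in Set.Ioo (0:ℝ) 1, x ^ (β - 1) * (1 - x) ^ (-β) = π / Real.sin (β * π) := by
  have hc := Complex.betaIntegral_convergent (u := (β : ℂ)) (v := ((1 - β : ℝ) : ℂ))
    (by simpa using hβ0) (by rw [Complex.ofReal_re]; linarith)
  have hv := Complex.betaIntegral_eq_Gamma_mul_div (β : ℂ) ((1 - β : ℝ) : ℂ)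
    (by simpa using hβ0) (by rw [Complex.ofReal_re]; linarith)
  have hE : ∀ x ∈ Set.Ioo (0:ℝ) 1,
      (x : ℂ) ^ ((β : ℂ) - 1) * (1 - (x : ℂ)) ^ (((1 - β : ℝ) : ℂ) - 1)
        = ((x ^ (β - 1) * (1 - x) ^ (-β) : ℝ) : ℂ) := by
    intro x hx
    have h1 : (0:ℝ) ≤ 1 - x := by linarith [hx.2]
    rw [Complex.ofReal_mul, Complex.ofReal_cpow hx.1.le, Complex.ofReal_cpow h1]
    push_cast
    congr 2
    ring
  rw [intervalIntegrable_iff_integrableOn_Ioo_of_le (by norm_num),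
    integrableOn_congr_fun hE measurableSet_Ioo] at hc
  rw [Complex.betaIntegral, intervalIntegral.integral_of_le (by norm_num),
    integral_Ioc_eq_integral_Ioo, setIntegral_congr_fun measurableSet_Ioo hE,
    integral_complex_ofReal] at hv
  refine ⟨?_, ?_⟩
  · have := hc.re
    simpa [IntegrableOn] using this
  · have h1 : ((β : ℂ) + ((1 - β : ℝ) : ℂ)) = 1 := by push_cast; ring
    rw [h1, Complex.Gamma_one, div_one, Complex.Gamma_ofReal, Complex.Gamma_ofReal,
      ← Complex.ofReal_mul, Real.Gamma_mul_Gamma_one_sub, mul_comm π β] at hv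
    exact_mod_cast hv

/-- For `0 < β < 1`, `λ > 0`, `τ > 0`, the Jacobi-weighted integral
`∫_{-1}^{1} (1-t)^{β-1}(1+t)^{-β} (τ(1-t) + (1+t)λ)⁻¹ dt` converges and
`λ^β = (2 sin(βπ)/π) τ^β λ ∫_{-1}^{1} (1-t)^{β-1}(1+t)^{-β} (τ(1-t)+(1+t)λ)⁻¹ dt`. -/
theorem stmt2 (β lam τ : ℝ) (hβ0 : 0 < β) (hβ1 : β < 1) (hlam : 0 < lam) (hτ : 0 < τ) :
    IntegrableOn
      (fun t : ℝ => (1 - t) ^ (β - 1) * (1 + t) ^ (-β) * (τ * (1 - t) + (1 + t) * lam)⁻¹)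
      (Set.Ioo (-1) 1) ∧
    lam ^ β = (2 * Real.sin (β * Real.pi) / Real.pi) * τ ^ β * lam *
      ∫ t in Set.Ioo (-1 : ℝ) 1,
        (1 - t) ^ (β - 1) * (1 + t) ^ (-β) * (τ * (1 - t) + (1 + t) * lam)⁻¹ := by
  obtain ⟨hi, hv⟩ := beta_aux β hβ0 hβ1
  have hD : ∀ t ∈ Set.Ioo (-1:ℝ) 1, 0 < τ * (1 - t) + (1 + t) * lam := by
    intro t ht
    have h1 : 0 < 1 - t := by linarith [ht.2]
    have h2 : 0 < 1 + t := by linarith [ht.1]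
    positivity
  set f : ℝ → ℝ := fun t => τ * (1 - t) / (τ * (1 - t) + (1 + t) * lam) with hf
  set f' : ℝ → ℝ := fun t => -(2 * τ * lam) / (τ * (1 - t) + (1 + t) * lam) ^ 2 with hf'
  have hder : ∀ t ∈ Set.Ioo (-1:ℝ) 1, HasDerivWithinAt f (f' t) (Set.Ioo (-1) 1) t := by
    intro t ht
    have hn : HasDerivAt (fun t : ℝ => τ * (1 - t)) (τ * (-1)) t :=
      ((hasDerivAt_id t).const_sub 1).const_mul τ
    have hm : HasDerivAt (fun t : ℝ => (1 + t) * lam) (1 * lam) t :=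
      ((hasDerivAt_id t).const_add 1).mul_const lam
    have := hn.div (hn.add hm) (hD t ht).ne'
    refine HasDerivAt.hasDerivWithinAt ?_
    refine HasDerivAt.congr_deriv (f := f) this ?_
    simp only [hf', Pi.add_apply]
    congr 1
    ring
  have hinj : Set.InjOn f (Set.Ioo (-1) 1) := by
    intro a ha b hb hab
    simp only [hf] at hab
    rw [div_eq_div_iff (hD a ha).ne' (hD b hb).ne'] at hab
    have : (2 * τ * lam) * (a - b) = 0 := by linear_combination -hab
    have h2 : 2 * τ * lam ≠ 0 := by positivity
    linarith [(mul_eq_zero.mp this).resolve_left h2]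
  have himg : f '' Set.Ioo (-1) 1 = Set.Ioo 0 1 := by
    ext x
    constructor
    · rintro ⟨t, ht, rfl⟩
      have h1 : 0 < 1 - t := by linarith [ht.2]
      have h2 : 0 < 1 + t := by linarith [ht.1]
      refine ⟨div_pos (by positivity) (hD t ht), ?_⟩
      simp only [hf]
      rw [div_lt_one (hD t ht)]
      have := mul_pos h2 hlam
      linarith
    · rintro ⟨h0, h1⟩
      have h1' : 0 < 1 - x := by linarith
      have p1 := mul_pos hτ h1'
      have p2 := mul_pos hlam h0
      have hE : 0 < τ * (1 - x) + lam * x := by positivity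
      have ht : (τ * (1 - x) - lam * x) / (τ * (1 - x) + lam * x) ∈ Set.Ioo (-1:ℝ) 1 := by
        constructor
        · rw [lt_div_iff₀ hE]; linarith
        · rw [div_lt_one hE]; linarith
      refine ⟨_, ht, ?_⟩
      have hd := hD _ ht
      simp only [hf]
      rw [div_eq_iff hd.ne']
      field_simp
      ring
  have hcong : ∀ t ∈ Set.Ioo (-1:ℝ) 1, |f' t| • ((f t) ^ (β - 1) * (1 - f t) ^ (-β)) =
      (2 * τ ^ β * lam ^ (1 - β)) *
        ((1 - t) ^ (β - 1) * (1 + t) ^ (-β) * (τ * (1 - t) + (1 + t) * lam)⁻¹) := by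
    intro t ht
    have h1 : 0 < 1 - t := by linarith [ht.2]
    have h2 : 0 < 1 + t := by linarith [ht.1]
    have hd := hD t ht
    have e1 : 1 - f t = (1 + t) * lam / (τ * (1 - t) + (1 + t) * lam) := by
      simp only [hf]; field_simp; ring
    have e2 : |f' t| = 2 * τ * lam / (τ * (1 - t) + (1 + t) * lam) ^ 2 := by
      simp only [hf']
      rw [neg_div, abs_neg, abs_of_pos (by positivity)]
    rw [e1, e2]
    simp only [hf, smul_eq_mul]
    generalize τ * (1 - t) + (1 + t) * lam = D at *
    rw [Real.div_rpow (by positivity) hd.le, Real.div_rpow (by positivity) hd.le,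
      Real.mul_rpow hτ.le h1.le, Real.mul_rpow h2.le hlam.le]
    have a1 : τ ^ β = τ ^ (β - 1) * τ := by
      rw [← Real.rpow_add_one hτ.ne']; congr 1; ring
    have a2 : lam ^ (1 - β) = lam ^ (-β) * lam := by
      rw [← Real.rpow_add_one hlam.ne']; congr 1; ring
    have a3 : D ^ (β - 1) * D ^ (-β) = D⁻¹ := by
      rw [← Real.rpow_add hd, ← Real.rpow_neg_one]; congr 1; ring
    have a4 : (D ^ (β - 1))⁻¹ * (D ^ (-β))⁻¹ = D := by
      rw [← mul_inv, a3, inv_inv]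
    rw [a1, a2]
    simp only [div_eq_mul_inv]
    have : (D ^ 2)⁻¹ * D = D⁻¹ := by field_simp
    calc _ = (2 * (τ ^ (β - 1) * τ) * (lam ^ (-β) * lam)) * ((1 - t) ^ (β - 1) * (1 + t) ^ (-β) *
          ((D ^ 2)⁻¹ * ((D ^ (β - 1))⁻¹ * (D ^ (-β))⁻¹))) := by ring
      _ = _ := by rw [a4, this]
  have hC : 0 < 2 * τ ^ β * lam ^ (1 - β) := by positivity
  have hI := (integrableOn_image_iff_integrableOn_abs_deriv_smul measurableSet_Ioo hder hinj
    (fun x : ℝ => x ^ (β - 1) * (1 - x) ^ (-β))).1 (by rw [himg]; exact hi)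
  have hV := integral_image_eq_integral_abs_deriv_smul measurableSet_Ioo hder hinj
    (fun x : ℝ => x ^ (β - 1) * (1 - x) ^ (-β))
  rw [himg, hv, setIntegral_congr_fun measurableSet_Ioo hcong, integral_const_mul] at hV
  rw [integrableOn_congr_fun hcong measurableSet_Ioo] at hI
  refine ⟨?_, ?_⟩
  · have := hI.const_mul (2 * τ ^ β * lam ^ (1 - β))⁻¹
    refine this.congr (Filter.Eventually.of_forall fun t => ?_)
    exact inv_mul_cancel_left₀ hC.ne' _
  · have hs : 0 < Real.sin (β * π) :=
      Real.sin_pos_of_pos_of_lt_pi (by positivity) (by nlinarith [Real.pi_pos])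
    have hl : lam ^ β * lam ^ (1 - β) = lam := by
      rw [← Real.rpow_add hlam, add_sub_cancel, Real.rpow_one]
    generalize (∫ t in Set.Ioo (-1 : ℝ) 1,
        (1 - t) ^ (β - 1) * (1 + t) ^ (-β) * (τ * (1 - t) + (1 + t) * lam)⁻¹) = J at *
    have hpi := Real.pi_pos
    calc lam ^ β = lam ^ β * (Real.sin (β * π) / π) * (π / Real.sin (β * π)) := by field_simp
      _ = (2 * Real.sin (β * π) / π) * τ ^ β * (lam ^ β * lam ^ (1 - β)) * J := by rw [hV]; ring
      _ = _ := by rw [hl]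
end

section
/- Let 0 < λ_min < λ_max, let κ = λ_max/λ_min, let γ = (√κ + 1)/(√κ − 1), and let p_τ(λ) = (τ + λ)/(τ - λ). Then τ_opt = √(λ_min λ_max) satisfies: for every τ with λ_min < τ < λ_max, inf { |p_τ(λ)| : λ ∈ [λ_min, λ_max], λ ≠ τ } ≤ γ, and inf { |p_{τ_opt}(λ)| : λ ∈ [λ_min, λ_max], λ ≠ τ_opt } = γ; that is, τ_opt = √(λ_min λ_max) maximizes τ ↦ inf_{λ ∈ [λ_min, λ_max]} |p_τ(λ)| over (λ_min, λ_max). -/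
/-- For `0 < λ_min < λ_max`, `κ = λ_max/λ_min`, `γ = (√κ+1)/(√κ-1)` and
`p_τ(λ) = (τ+λ)/(τ-λ)`, the value `τ_opt = √(λ_min λ_max)` maximizes
`τ ↦ inf { |p_τ(λ)| : λ ∈ [λ_min, λ_max], λ ≠ τ }` over `(λ_min, λ_max)`: every such
infimum is at most `γ`, and for `τ_opt` it equals `γ`. -/
theorem stmt7 (lmin lmax : ℝ) (h0 : 0 < lmin) (hlt : lmin < lmax) :
    (∀ τ : ℝ, lmin < τ → τ < lmax →
      sInf {v : ℝ | ∃ lam ∈ Set.Icc lmin lmax, lam ≠ τ ∧ v = |(τ + lam) / (τ - lam)|} ≤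
        (Real.sqrt (lmax / lmin) + 1) / (Real.sqrt (lmax / lmin) - 1)) ∧
    sInf {v : ℝ | ∃ lam ∈ Set.Icc lmin lmax, lam ≠ Real.sqrt (lmin * lmax) ∧
        v = |(Real.sqrt (lmin * lmax) + lam) / (Real.sqrt (lmin * lmax) - lam)|} =
      (Real.sqrt (lmax / lmin) + 1) / (Real.sqrt (lmax / lmin) - 1) := by
  obtain ⟨a, ha, rfl⟩ : ∃ a : ℝ, 0 < a ∧ lmin = a ^ 2 :=
    ⟨Real.sqrt lmin, Real.sqrt_pos.2 h0, (Real.sq_sqrt h0.le).symm⟩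
  obtain ⟨b, hb, rfl⟩ : ∃ b : ℝ, 0 < b ∧ lmax = b ^ 2 :=
    ⟨Real.sqrt lmax, Real.sqrt_pos.2 (h0.trans hlt), (Real.sq_sqrt (h0.trans hlt).le).symm⟩
  have hab : a < b := lt_of_pow_lt_pow_left₀ 2 hb.le hlt
  have hs : Real.sqrt (a ^ 2 * b ^ 2) = a * b := by
    rw [← mul_pow, Real.sqrt_sq (by positivity)]
  have hk : Real.sqrt (b ^ 2 / a ^ 2) = b / a := by
    rw [← div_pow, Real.sqrt_sq (by positivity)]
  have hd : 0 < b - a := sub_pos.2 hab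
  have hg : (b / a + 1) / (b / a - 1) = (b + a) / (b - a) := by
    have h1 : b / a + 1 = (b + a) / a := by field_simp
    have h2 : b / a - 1 = (b - a) / a := by field_simp
    rw [h1, h2, div_div_div_cancel_right₀ ha.ne']
  rw [hs, hk, hg]
  have key : ∀ τ : ℝ, a ^ 2 < τ → τ < b ^ 2 →
      sInf {v : ℝ | ∃ lam ∈ Set.Icc (a ^ 2) (b ^ 2), lam ≠ τ ∧ v = |(τ + lam) / (τ - lam)|} ≤
        (b + a) / (b - a) := by
    intro τ h1 h2
    have hbdd : BddBelow {v : ℝ | ∃ lam ∈ Set.Icc (a ^ 2) (b ^ 2), lam ≠ τ ∧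
        v = |(τ + lam) / (τ - lam)|} := by
      refine ⟨0, ?_⟩
      rintro v ⟨lam, _, _, rfl⟩
      exact abs_nonneg _
    rcases le_total (a * b) τ with h | h
    · refine (csInf_le hbdd ⟨a ^ 2, ⟨le_rfl, hlt.le⟩, h1.ne, rfl⟩).trans ?_
      rw [abs_div, abs_of_pos (by linarith : 0 < τ + a ^ 2), abs_of_pos (sub_pos.2 h1),
        div_le_div_iff₀ (sub_pos.2 h1) hd]
      nlinarith [mul_le_mul_of_nonneg_left h ha.le]
    · refine (csInf_le hbdd ⟨b ^ 2, ⟨hlt.le, le_rfl⟩, h2.ne', rfl⟩).trans ?_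
      rw [abs_div, abs_of_pos (by linarith : 0 < τ + b ^ 2), abs_sub_comm,
        abs_of_pos (sub_pos.2 h2), div_le_div_iff₀ (sub_pos.2 h2) hd]
      nlinarith [mul_le_mul_of_nonneg_left h hb.le]
  refine ⟨key, le_antisymm (key _ (by nlinarith) (by nlinarith)) ?_⟩
  refine le_csInf ⟨_, a ^ 2, ⟨le_rfl, hlt.le⟩, by nlinarith, rfl⟩ ?_
  rintro v ⟨lam, ⟨hl1, hl2⟩, hne, rfl⟩
  have hab0 : 0 < a * b := mul_pos ha hb
  have hp : 0 < |a * b - lam| := abs_pos.2 (sub_ne_zero.2 hne.symm)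
  rw [abs_div, abs_of_pos (by linarith : 0 < a * b + lam), div_le_div_iff₀ hd hp]
  rcases abs_cases (a * b - lam) with ⟨h, _⟩ | ⟨h, _⟩ <;> rw [h]
  · nlinarith [mul_le_mul_of_nonneg_left hl1 hb.le]
  · nlinarith [mul_le_mul_of_nonneg_left hl2 ha.le]
end

section
/- Let 0 < λ_min < λ_max, κ = λ_max/λ_min, γ = (√κ + 1)/(√κ − 1), τ = √(λ_min λ_max), and p_τ(λ) = (τ + λ)/(τ - λ). Then p_τ(λ_min) = γ, p_τ(λ_max) = −γ, and |p_τ(λ)| ≥ γ for every λ ∈ [λ_min, λ_max] with λ ≠ τ; consequently the image { p_τ(λ) : λ ∈ [λ_min, λ_max], λ ≠ τ } is contained in (−∞, −γ] ∪ [γ, +∞). -/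
/-- For `0 < λ_min < λ_max`, `κ = λ_max/λ_min`, `γ = (√κ+1)/(√κ-1)`,
`τ = √(λ_min λ_max)` and `p_τ(λ) = (τ+λ)/(τ-λ)`: `p_τ(λ_min) = γ`, `p_τ(λ_max) = -γ`,
`|p_τ(λ)| ≥ γ` on `[λ_min, λ_max] \ {τ}`, and hence the image of `p_τ` is contained in
`(-∞, -γ] ∪ [γ, ∞)`. -/
theorem stmt8 (lmin lmax : ℝ) (h0 : 0 < lmin) (hlt : lmin < lmax) :
    let τ := Real.sqrt (lmin * lmax)
    let γ := (Real.sqrt (lmax / lmin) + 1) / (Real.sqrt (lmax / lmin) - 1)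
    (τ + lmin) / (τ - lmin) = γ ∧
    (τ + lmax) / (τ - lmax) = -γ ∧
    (∀ lam ∈ Set.Icc lmin lmax, lam ≠ τ → γ ≤ |(τ + lam) / (τ - lam)|) ∧
    {v : ℝ | ∃ lam ∈ Set.Icc lmin lmax, lam ≠ τ ∧ v = (τ + lam) / (τ - lam)} ⊆
      Set.Iic (-γ) ∪ Set.Ici γ := by
  intro τ γ
  obtain ⟨s, hs⟩ : ∃ s, s = Real.sqrt (lmax / lmin) := ⟨_, rfl⟩
  have hs1 : 1 < s := by
    rw [hs, Real.lt_sqrt (by norm_num), lt_div_iff₀ h0]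
    linarith
  have hmax : lmax = s ^ 2 * lmin := by
    rw [hs, Real.sq_sqrt (div_nonneg (h0.trans hlt).le h0.le)]
    field_simp
  have hτ : τ = s * lmin := by
    have h : lmin * lmax = (s * lmin) ^ 2 := by rw [hmax]; ring
    change Real.sqrt (lmin * lmax) = _
    rw [h, Real.sqrt_sq (by positivity)]
  have hγ : γ = (s + 1) / (s - 1) := by
    change (Real.sqrt (lmax / lmin) + 1) / (Real.sqrt (lmax / lmin) - 1) = _
    rw [← hs]
  clear_value τ γ
  have hsp : 0 < s - 1 := by linarith
  have key : ∀ lam ∈ Set.Icc lmin lmax, lam ≠ τ → γ ≤ |(τ + lam) / (τ - lam)| := by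
    rintro lam ⟨h1, h2⟩ hne
    have hlam : 0 < lam := by linarith
    have hτ0 : 0 < τ := by rw [hτ]; positivity
    rw [abs_div, abs_of_pos (by linarith : 0 < τ + lam), hγ]
    rcases lt_or_gt_of_ne hne with h | h
    · rw [abs_of_pos (by linarith : 0 < τ - lam), div_le_div_iff₀ hsp (by linarith)]
      have : s * lmin ≤ s * lam := mul_le_mul_of_nonneg_left h1 (by linarith)
      nlinarith
    · rw [abs_of_neg (by linarith : τ - lam < 0), div_le_div_iff₀ hsp (by linarith)]
      have : lam ≤ s * τ := by rw [hτ]; linarith [hmax, h2]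
      nlinarith
  refine ⟨?_, ?_, key, ?_⟩
  · have : s * lmin - lmin ≠ 0 := by
      have := mul_pos hsp h0
      intro h
      linarith
    rw [hγ, hτ, div_eq_div_iff this hsp.ne']
    ring
  · have : s * lmin - s ^ 2 * lmin ≠ 0 := by
      have := mul_pos (mul_pos hsp h0) (by linarith : 0 < s)
      intro h
      linarith
    rw [hγ, hτ, hmax, ← neg_div, div_eq_div_iff this hsp.ne']
    ring
  · rintro v ⟨lam, hl, hne, rfl⟩
    rcases le_abs.mp (key lam hl hne) with h | h
    · exact Or.inr h
    · exact Or.inl (le_neg.mpr h)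
end
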